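/- For every real x ∈ [−1,1]: 2·∫_{−1}^1 log|x−t|·ψ(t) dt − π|x| = −2 − 2·log 2 (the Euler–Lagrange equality on the support for the equilibrium measure ψ(t)dt in the external field π|t|, with Lagrange constant ℓ = −2 − 2 log 2). -/

import Mathlib

open MeasureTheory Real

/-- The equilibrium density `ψ(x) = (1/π) log((1+√(1-x²))/|x|)`. -/
noncomputable def psiDens (x : ℝ) : ℝ :=
  (1 / π) * Real.log ((1 + Real.sqrt (1 - x ^ 2)) / |x|)

/-! The density `ψ` is a mixture of arcsine laws: `ψ(t) = ∫₀¹ w_s(t) ds`, where `w_s` is the density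
of `s cos θ` for `θ` uniform on `[0, π]`. By Fubini the logarithmic potential of `ψ` is the average
of the potentials of the `w_s`. Writing `x = s cosh w`, the Joukowski factorization
`2 |cosh w - Re z| = |z - e^w| |z - e^{-w}|` on the unit circle and Jensen's formula show that
`w_s` has potential `log (s / 2) + |Re w|`, where `|Re w| = arcosh (max 1 (|x| / s))`. Integrating
over `s`, the first term gives `-1 - log 2`. Since `π ψ(u) = arcosh (1 / |u|)`, the second gives
`π |x| ∫₀¹ ψ = π |x| / 2`, because `ψ` is even and its total mass is `1` as for every mixture. -/

section LogSquareIntegrable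

lemma log_sq_le_add_rpow {u : ℝ} (hu : 0 < u) :
    log u ^ 2 ≤ 32 * (u ^ (1 / 2 : ℝ) + u ^ (-(1 / 2) : ℝ)) := by
  have hlog : |log u| ≤ 4 * (u ^ (1 / 4 : ℝ) + u ^ (-(1 / 4) : ℝ)) := by
    have hpos := log_le_rpow_div hu.le (by norm_num : (0 : ℝ) < 1 / 4)
    have hneg := log_le_rpow_div (inv_nonneg.2 hu.le) (by norm_num : (0 : ℝ) < 1 / 4)
    rw [log_inv, inv_rpow hu.le, ← rpow_neg hu.le] at hneg
    have := rpow_pos_of_pos hu (1 / 4)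
    have := rpow_pos_of_pos hu (-(1 / 4))
    exact abs_le.2 ⟨by linarith, by linarith⟩
  calc log u ^ 2 = |log u| ^ 2 := (sq_abs _).symm
    _ ≤ (4 * (u ^ (1 / 4 : ℝ) + u ^ (-(1 / 4) : ℝ))) ^ 2 := by gcongr
    _ ≤ 32 * ((u ^ (1 / 4 : ℝ)) ^ 2 + (u ^ (-(1 / 4) : ℝ)) ^ 2) := by
      linarith [add_sq_le (a := u ^ (1 / 4 : ℝ)) (b := u ^ (-(1 / 4) : ℝ))]
    _ = 32 * (u ^ (1 / 2 : ℝ) + u ^ (-(1 / 2) : ℝ)) := by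
      rw [← rpow_mul_natCast hu.le, ← rpow_mul_natCast hu.le]
      norm_num

lemma intervalIntegrable_log_sq (a b : ℝ) :
    IntervalIntegrable (fun u ↦ log u ^ 2) volume a b := by
  refine intervalIntegrable_of_even (fun u ↦ by simp) (fun c hc ↦ ?_)
  have hbound : IntervalIntegrable
      (fun u : ℝ ↦ 32 * (u ^ (1 / 2 : ℝ) + u ^ (-(1 / 2) : ℝ))) volume 0 c :=
    ((intervalIntegral.intervalIntegrable_rpow' (by norm_num)).add
      (intervalIntegral.intervalIntegrable_rpow' (by norm_num))).const_mul 32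
  refine hbound.mono_fun' (by fun_prop) ?_
  filter_upwards [ae_restrict_mem measurableSet_uIoc] with u hu
  rw [Set.uIoc_of_le hc.le] at hu
  simpa using log_sq_le_add_rpow hu.1

lemma memLp_two_log_abs_sub (x a b : ℝ) :
    MemLp (fun t ↦ log |x - t|) 2 (volume.restrict (Set.Ioc a b)) := by
  have hmeas : Measurable fun t ↦ log |x - t| := by fun_prop
  rw [memLp_two_iff_integrable_sq hmeas.aestronglyMeasurable]
  simpa using! ((intervalIntegrable_log_sq (x - a) (x - b)).comp_sub_left x).1

end LogSquareIntegrable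

section CircleAverage

lemma norm_sub_exp_mul_norm_sub_exp_neg {z : ℂ} (hz : ‖z‖ = 1) (w : ℂ) :
    ‖z - Complex.exp w‖ * ‖z - Complex.exp (-w)‖ = 2 * ‖Complex.cosh w - z.re‖ := by
  have hexp : Complex.exp w * Complex.exp (-w) = 1 := by simp [← Complex.exp_add]
  have hconj : z * (starRingEnd ℂ) z = 1 := by simp [Complex.mul_conj', hz]
  have hfactor : (z - Complex.exp w) * (z - Complex.exp (-w)) =
      -z * (2 * (Complex.cosh w - z.re)) := by
    rw [Complex.cosh, Complex.re_eq_add_conj]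
    linear_combination hexp - hconj
  rw [← norm_mul, hfactor]
  simp [hz]

lemma posLog_exp_add_posLog_exp_neg (r : ℝ) : log⁺ (exp r) + log⁺ (exp (-r)) = |r| := by
  rw [posLog_apply, posLog_apply, log_exp, log_exp, max_comm, max_comm 0,
    max_zero_add_max_neg_zero_eq_abs_self]

lemma circleAverage_log_norm_cosh_sub_re (w : ℂ) {c : ℝ} (hc : 0 < c) :
    circleAverage (fun z : ℂ ↦ log ‖c * (Complex.cosh w - z.re)‖) 0 1 = log (c / 2) + |w.re| := by
  have hfactor : circleAverage (fun z : ℂ ↦ log ‖c * (Complex.cosh w - z.re)‖) 0 1 =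
      circleAverage (fun z : ℂ ↦
        log (c / 2) + (log ‖z - Complex.exp w‖ + log ‖z - Complex.exp (-w)‖)) 0 1 := by
    refine circleAverage_congr_codiscreteWithin ?_ one_ne_zero
    filter_upwards [compl_finite_mem_codiscreteWithin
        (Set.toFinite {Complex.exp w, Complex.exp (-w)}),
      Filter.self_mem_codiscreteWithin _] with z hz hz_sphere
    obtain ⟨hz₁, hz₂⟩ : z ≠ Complex.exp w ∧ z ≠ Complex.exp (-w) := by simpa using hz
    have hz_norm : ‖z‖ = 1 := by simpa using hz_sphere
    have hne₁ := norm_ne_zero_iff.2 (sub_ne_zero.2 hz₁)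
    have hne₂ := norm_ne_zero_iff.2 (sub_ne_zero.2 hz₂)
    rw [← log_mul hne₁ hne₂, ← log_mul (by positivity) (mul_ne_zero hne₁ hne₂),
      norm_sub_exp_mul_norm_sub_exp_neg hz_norm, norm_mul, Complex.norm_of_nonneg hc.le]
    congr 1
    ring
  have hint (a : ℂ) : CircleIntegrable (fun z ↦ log ‖z - a‖) 0 1 :=
    circleIntegrable_log_norm_sub_const 1
  have hint_add (a b : ℂ) : CircleIntegrable (fun z ↦ log ‖z - a‖ + log ‖z - b‖) 0 1 :=
    (hint a).add (hint b)
  rw [hfactor, circleAverage_fun_add (circleIntegrable_const _ _ _) (hint_add _ _),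
    circleAverage_fun_add (hint _) (hint _), circleAverage_const,
    circleAverage_log_norm_sub_const_eq_posLog, circleAverage_log_norm_sub_const_eq_posLog,
    Complex.norm_exp, Complex.norm_exp, Complex.neg_re, posLog_exp_add_posLog_exp_neg]

lemma exists_cosh_eq_ofReal (y : ℝ) :
    ∃ w : ℂ, Complex.cosh w = y ∧ |w.re| = arcosh (max 1 |y|) := by
  rcases le_total |y| 1 with hy | hy
  · refine ⟨arccos y * Complex.I, ?_, by simp [hy]⟩
    rw [Complex.cosh_mul_I, ← Complex.ofReal_cos, cos_arccos (abs_le.1 hy).1 (abs_le.1 hy).2]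
  · have hcosh : Complex.cosh (arcosh |y|) = (|y| : ℝ) := by
      rw [← Complex.ofReal_cosh, cosh_arcosh hy]
    rw [max_eq_right hy]
    rcases abs_choice y with h | h
    · exact ⟨arcosh |y|, by rw [hcosh, h], by simp [arcosh_nonneg hy]⟩
    · refine ⟨arcosh |y| + π * Complex.I, ?_, by simp [arcosh_nonneg hy]⟩
      rw [Complex.cosh_add_pi_mul_I, hcosh, h]
      simp

lemma circleAverage_comp_re {g : ℝ → ℝ} (hg : IntervalIntegrable (fun θ ↦ g (cos θ)) volume 0 π) :
    circleAverage (fun z ↦ g z.re) 0 1 = 1 / π * ∫ θ in 0..π, g (cos θ) := by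
  have hre (θ : ℝ) : (circleMap 0 1 θ).re = cos θ := by
    simp [circleMap, Complex.exp_ofReal_mul_I_re]
  have hreflect : ∫ θ in π..2 * π, g (cos θ) = ∫ θ in 0..π, g (cos θ) := by
    have := intervalIntegral.integral_comp_sub_left (fun θ ↦ g (cos θ)) (a := 0) (b := π) (2 * π)
    simp only [cos_two_pi_sub] at this
    rw [this]
    congr 1 <;> ring
  have hg' : IntervalIntegrable (fun θ ↦ g (cos θ)) volume π (2 * π) := by
    have := hg.symm.comp_sub_left (2 * π)
    simp only [cos_two_pi_sub] at this
    convert this using 1 <;> ring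
  simp only [circleAverage_def, hre]
  rw [← intervalIntegral.integral_add_adjacent_intervals hg hg', hreflect, smul_eq_mul]
  field_simp
  ring

lemma integral_log_abs_sub_mul_cos (x : ℝ) {s : ℝ} (hs : 0 < s) :
    1 / π * ∫ θ in 0..π, log |x - s * cos θ| = log (s / 2) + arcosh (max 1 (|x| / s)) := by
  obtain ⟨w, hw, hre⟩ := exists_cosh_eq_ofReal (x / s)
  have hint : IntervalIntegrable (fun θ ↦ log |x - s * cos θ|) volume 0 π := by
    simp only [log_abs]
    refine MeromorphicOn.intervalIntegrable_log fun θ _ ↦ AnalyticAt.meromorphicAt ?_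
    fun_prop
  have habs : |x| / s = |x / s| := by rw [abs_div, abs_of_pos hs]
  rw [← circleAverage_comp_re (g := fun u ↦ log |x - s * u|) hint, habs, ← hre,
    ← circleAverage_log_norm_cosh_sub_re w hs, hw]
  congr 1 with z
  rw [← Complex.ofReal_sub, ← Complex.ofReal_mul, Complex.norm_real, norm_eq_abs, mul_sub,
    mul_div_cancel₀ x hs.ne']

end CircleAverage

section ArcsineLaw

/-- The density of the arcsine law on `[-s, s]`. Outside `(-s, s)` the square root is `0` and so is
its inverse, hence no indicator function is needed. Averaging over `s ∈ (0, 1]` gives `psiDens`. -/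
noncomputable def arcsineDens (s t : ℝ) : ℝ :=
  1 / π * (√(s ^ 2 - t ^ 2))⁻¹

lemma arcsineDens_nonneg (s t : ℝ) : 0 ≤ arcsineDens s t := by
  unfold arcsineDens
  positivity

lemma arcsineDens_eq_zero {s t : ℝ} (h : |s| ≤ |t|) : arcsineDens s t = 0 := by
  rw [arcsineDens, sqrt_eq_zero_of_nonpos (sub_nonpos.2 (sq_le_sq.2 h)), inv_zero, mul_zero]

lemma measurable_uncurry_arcsineDens : Measurable (Function.uncurry arcsineDens) := by
  unfold Function.uncurry arcsineDens
  fun_prop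

lemma arcsineDens_mul_left {s : ℝ} (hs : 0 < s) (u : ℝ) :
    arcsineDens s (s * u) = s⁻¹ * arcsineDens 1 u := by
  rw [arcsineDens, arcsineDens, show s ^ 2 - (s * u) ^ 2 = s ^ 2 * (1 ^ 2 - u ^ 2) by ring,
    sqrt_mul (sq_nonneg s), sqrt_sq hs.le, mul_inv]
  ring

lemma integral_mul_arcsineDens_one (f : ℝ → ℝ) :
    ∫ u, f u * arcsineDens 1 u = 1 / π * ∫ θ in 0..π, f (cos θ) := by
  have hsupport : ∀ u ∉ Set.Ioc (-1 : ℝ) 1, f u * arcsineDens 1 u = 0 := by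
    intro u hu
    rw [arcsineDens_eq_zero, mul_zero]
    by_contra! h
    rw [abs_one, abs_lt] at h
    exact hu ⟨h.1, h.2.le⟩
  rw [← setIntegral_eq_integral_of_forall_compl_eq_zero hsupport,
    ← intervalIntegral.integral_of_le (by norm_num),
    ← Polynomial.Chebyshev.integral_measureT_eq_integral_cos,
    Polynomial.Chebyshev.integral_measureT, ← intervalIntegral.integral_const_mul]
  congr 1 with u
  rw [arcsineDens, sqrt_inv, one_pow]
  ring

lemma integral_mul_arcsineDens (f : ℝ → ℝ) {s : ℝ} (hs : 0 < s) :
    ∫ t, f t * arcsineDens s t = 1 / π * ∫ θ in 0..π, f (s * cos θ) := by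
  have hscale := Measure.integral_comp_mul_left (fun t ↦ f t * arcsineDens s t) s
  rw [abs_of_pos (inv_pos.2 hs), smul_eq_mul] at hscale
  calc ∫ t, f t * arcsineDens s t
      = s * ∫ u, f (s * u) * arcsineDens s (s * u) := by rw [hscale]; field_simp
    _ = ∫ u, f (s * u) * arcsineDens 1 u := by
      rw [← integral_const_mul]
      congr 1 with u
      rw [arcsineDens_mul_left hs]
      field_simp
    _ = 1 / π * ∫ θ in 0..π, f (s * cos θ) := integral_mul_arcsineDens_one fun u ↦ f (s * u)

lemma integral_arcsineDens {s : ℝ} (hs : 0 < s) : ∫ t, arcsineDens s t = 1 := by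
  simpa [pi_ne_zero] using integral_mul_arcsineDens (fun _ ↦ 1) hs

lemma integral_log_abs_sub_mul_arcsineDens (x : ℝ) {s : ℝ} (hs : 0 < s) :
    ∫ t, log |x - t| * arcsineDens s t = log (s / 2) + arcosh (max 1 (|x| / s)) := by
  rw [integral_mul_arcsineDens _ hs, integral_log_abs_sub_mul_cos x hs]

lemma hasDerivAt_arcosh_div_const {c s : ℝ} (hc : 0 < c) (hcs : c < s) :
    HasDerivAt (fun s ↦ arcosh (s / c)) (√(s ^ 2 - c ^ 2))⁻¹ s := by
  have hderiv := (hasDerivAt_arcosh ((one_lt_div hc).2 hcs)).comp s ((hasDerivAt_id s).div_const c)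
  refine hderiv.congr_deriv ?_
  rw [show (s / c) ^ 2 - 1 = (s ^ 2 - c ^ 2) / c ^ 2 by field_simp, sqrt_div' _ (sq_nonneg c),
    sqrt_sq hc.le]
  field_simp

lemma hasDerivAt_arcosh_div_abs {s t : ℝ} (ht : t ≠ 0) (hts : |t| < s) :
    HasDerivAt (fun s ↦ 1 / π * arcosh (s / |t|)) (arcsineDens s t) s := by
  simpa only [arcsineDens, sq_abs] using
    (hasDerivAt_arcosh_div_const (abs_pos.2 ht) hts).const_mul (1 / π)

lemma continuousOn_arcosh_div_const {c : ℝ} (hc : 0 < c) :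
    ContinuousOn (fun s ↦ arcosh (s / c)) (Set.Ici c) :=
  continuousOn_arcosh.comp (by fun_prop) fun _ hs ↦ (one_le_div hc).2 hs

lemma eqOn_zero_arcsineDens (t : ℝ) :
    Set.EqOn (fun _ ↦ 0) (fun s ↦ arcsineDens s t) (Set.uIcc 0 |t|) := by
  intro s hs
  rw [Set.uIcc_of_le (abs_nonneg t)] at hs
  exact (arcsineDens_eq_zero (by rw [abs_of_nonneg hs.1]; exact hs.2)).symm

lemma intervalIntegrable_arcsineDens_zero_abs (t : ℝ) :
    IntervalIntegrable (fun s ↦ arcsineDens s t) volume 0 |t| :=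
  intervalIntegrable_const.congr ((eqOn_zero_arcsineDens t).mono Set.uIoc_subset_uIcc)

lemma intervalIntegrable_arcsineDens_abs {t b : ℝ} (ht : t ≠ 0) (htb : |t| ≤ b) :
    IntervalIntegrable (fun s ↦ arcsineDens s t) volume |t| b := by
  rw [intervalIntegrable_iff_integrableOn_Ioc_of_le htb]
  exact intervalIntegral.integrableOn_deriv_of_nonneg
    (((continuousOn_arcosh_div_const (abs_pos.2 ht)).mono
      Set.Icc_subset_Ici_self).const_mul (1 / π))
    (fun s hs ↦ hasDerivAt_arcosh_div_abs ht hs.1) (fun s _ ↦ arcsineDens_nonneg s t)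

lemma intervalIntegrable_arcsineDens {t b : ℝ} (ht : t ≠ 0) (htb : |t| ≤ b) :
    IntervalIntegrable (fun s ↦ arcsineDens s t) volume 0 b :=
  (intervalIntegrable_arcsineDens_zero_abs t).trans (intervalIntegrable_arcsineDens_abs ht htb)

lemma intervalIntegral_arcsineDens {t b : ℝ} (ht : t ≠ 0) (htb : |t| ≤ b) :
    ∫ s in 0..b, arcsineDens s t = 1 / π * arcosh (b / |t|) := by
  have hcont : ContinuousOn (fun s ↦ arcosh (s / |t|)) (Set.Icc |t| b) :=
    (continuousOn_arcosh_div_const (abs_pos.2 ht)).mono Set.Icc_subset_Ici_self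
  calc ∫ s in 0..b, arcsineDens s t
      = (∫ s in 0..|t|, arcsineDens s t) + ∫ s in |t|..b, arcsineDens s t :=
        (intervalIntegral.integral_add_adjacent_intervals
          (intervalIntegrable_arcsineDens_zero_abs t)
          (intervalIntegrable_arcsineDens_abs ht htb)).symm
    _ = 0 + (1 / π * arcosh (b / |t|) - 1 / π * arcosh (|t| / |t|)) := by
        rw [← intervalIntegral.integral_congr (eqOn_zero_arcsineDens t),
          intervalIntegral.integral_zero,
          intervalIntegral.integral_eq_sub_of_hasDerivAt_of_le htb (hcont.const_mul (1 / π))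
            (fun s hs ↦ hasDerivAt_arcosh_div_abs ht hs.1)
            (intervalIntegrable_arcsineDens_abs ht htb)]
    _ = 1 / π * arcosh (b / |t|) := by
        rw [div_self (abs_ne_zero.2 ht), arcosh_zero]
        ring

end ArcsineLaw

section EquilibriumDensity

lemma psiDens_eq_arcosh (t : ℝ) : psiDens t = 1 / π * arcosh |t|⁻¹ := by
  rcases eq_or_ne t 0 with rfl | ht
  · simp [psiDens, arcosh, sqrt_eq_zero_of_nonpos]
  have ht_pos : 0 < |t| := abs_pos.2 ht
  rw [psiDens, arcosh, ← sq_abs t,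
    show |t|⁻¹ ^ 2 - 1 = (1 - |t| ^ 2) / |t| ^ 2 by field_simp, sqrt_div' _ (sq_nonneg _),
    sqrt_sq ht_pos.le, add_div, one_div |t|]

lemma psiDens_neg (t : ℝ) : psiDens (-t) = psiDens t := by
  simp [psiDens]

lemma ae_ne_zero_and_abs_le_one : ∀ᵐ t ∂volume.restrict (Set.Ioc (-1 : ℝ) 1), t ≠ 0 ∧ |t| ≤ 1 := by
  filter_upwards [ae_restrict_of_ae (Measure.ae_ne volume 0),
    ae_restrict_mem measurableSet_Ioc] with t ht_ne ht
  exact ⟨ht_ne, abs_le.2 ⟨ht.1.le, ht.2⟩⟩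

lemma setIntegral_arcsineDens_eq_psiDens {t : ℝ} (ht : t ≠ 0) (ht_le : |t| ≤ 1) :
    ∫ s in Set.Ioc 0 1, arcsineDens s t = psiDens t := by
  rw [← intervalIntegral.integral_of_le zero_le_one,
    intervalIntegral_arcsineDens ht ht_le, psiDens_eq_arcosh, one_div |t|]

lemma psiDens_nonneg {t : ℝ} (ht : |t| ≤ 1) : 0 ≤ psiDens t := by
  rcases eq_or_ne t 0 with rfl | ht_ne
  · simp [psiDens]
  · rw [psiDens_eq_arcosh]
    exact mul_nonneg (by positivity) (arcosh_nonneg ((one_le_inv₀ (abs_pos.2 ht_ne)).2 ht))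

lemma memLp_two_psiDens (a b : ℝ) : MemLp psiDens 2 (volume.restrict (Set.Ioc a b)) := by
  have hsqrt (t : ℝ) : √(1 - t ^ 2) ≤ 1 := sqrt_le_one.2 (by linarith [sq_nonneg t])
  have hbounded : MemLp (fun t : ℝ ↦ log (1 + √(1 - t ^ 2))) 2
      (volume.restrict (Set.Ioc a b)) := by
    refine MemLp.of_bound (Measurable.aestronglyMeasurable (by fun_prop)) (log 2)
      (ae_of_all _ fun t ↦ ?_)
    rw [norm_of_nonneg (log_nonneg (by linarith [sqrt_nonneg (1 - t ^ 2)]))]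
    gcongr
    linarith [hsqrt t]
  have hlog : MemLp (fun t ↦ log |t|) 2 (volume.restrict (Set.Ioc a b)) := by
    simpa using memLp_two_log_abs_sub 0 a b
  refine ((hbounded.sub hlog).const_mul (1 / π)).ae_eq ?_
  filter_upwards [ae_restrict_of_ae (Measure.ae_ne volume 0)] with t ht
  rw [psiDens, log_div (by positivity) (abs_ne_zero.2 ht), Pi.sub_apply]

lemma intervalIntegrable_psiDens (a b : ℝ) : IntervalIntegrable psiDens volume a b :=
  ⟨(memLp_two_psiDens a b).integrable one_le_two, (memLp_two_psiDens b a).integrable one_le_two⟩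

lemma integrable_prod_mul_arcsineDens {f : ℝ → ℝ}
    (hf : AEStronglyMeasurable f (volume.restrict (Set.Ioc (-1) 1)))
    (hfψ : IntegrableOn (fun t ↦ f t * psiDens t) (Set.Ioc (-1) 1)) :
    Integrable (Function.uncurry fun t s ↦ f t * arcsineDens s t)
      ((volume.restrict (Set.Ioc (-1) 1)).prod (volume.restrict (Set.Ioc 0 1))) := by
  have hmeas : AEStronglyMeasurable (Function.uncurry fun t s ↦ f t * arcsineDens s t)
      ((volume.restrict (Set.Ioc (-1) 1)).prod (volume.restrict (Set.Ioc 0 1))) :=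
    hf.comp_fst.mul (measurable_uncurry_arcsineDens.comp measurable_swap).aestronglyMeasurable
  refine (integrable_prod_iff hmeas).2 ⟨?_, hfψ.norm.congr ?_⟩
  · filter_upwards [ae_ne_zero_and_abs_le_one] with t ⟨ht, ht_le⟩
    have := intervalIntegrable_arcsineDens ht ht_le
    rw [intervalIntegrable_iff_integrableOn_Ioc_of_le zero_le_one] at this
    exact this.const_mul (f t)
  · filter_upwards [ae_ne_zero_and_abs_le_one] with t ⟨ht, ht_le⟩
    simp only [Function.uncurry, norm_mul, integral_const_mul,
      norm_of_nonneg (arcsineDens_nonneg _ _), norm_of_nonneg (psiDens_nonneg ht_le),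
      setIntegral_arcsineDens_eq_psiDens ht ht_le]

lemma integral_mul_psiDens {f : ℝ → ℝ}
    (hf : AEStronglyMeasurable f (volume.restrict (Set.Ioc (-1) 1)))
    (hfψ : IntegrableOn (fun t ↦ f t * psiDens t) (Set.Ioc (-1) 1)) :
    ∫ t in -1..1, f t * psiDens t = ∫ s in 0..1, ∫ t, f t * arcsineDens s t := by
  rw [intervalIntegral.integral_of_le (by norm_num), intervalIntegral.integral_of_le zero_le_one]
  calc ∫ t in Set.Ioc (-1) 1, f t * psiDens t
      = ∫ t in Set.Ioc (-1) 1, ∫ s in Set.Ioc 0 1, f t * arcsineDens s t := by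
        refine integral_congr_ae ?_
        filter_upwards [ae_ne_zero_and_abs_le_one] with t ⟨ht, ht_le⟩
        rw [integral_const_mul, setIntegral_arcsineDens_eq_psiDens ht ht_le]
    _ = ∫ s in Set.Ioc 0 1, ∫ t in Set.Ioc (-1) 1, f t * arcsineDens s t :=
        integral_integral_swap (integrable_prod_mul_arcsineDens hf hfψ)
    _ = ∫ s in Set.Ioc 0 1, ∫ t, f t * arcsineDens s t := by
        refine setIntegral_congr_fun measurableSet_Ioc fun s hs ↦
          setIntegral_eq_integral_of_forall_compl_eq_zero fun t ht ↦ ?_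
        rw [arcsineDens_eq_zero, mul_zero]
        by_contra! h
        obtain ⟨hlt, hgt⟩ := abs_lt.1 (h.trans_le ((abs_of_pos hs.1).trans_le hs.2))
        exact ht ⟨hlt, hgt.le⟩

lemma integral_psiDens : ∫ t in -1..1, psiDens t = 1 := by
  calc ∫ t in -1..1, psiDens t = ∫ s in 0..1, ∫ t, arcsineDens s t := by
        simpa using integral_mul_psiDens (f := fun _ ↦ 1) aestronglyMeasurable_const
          (by simpa using (intervalIntegrable_psiDens (-1) 1).1)
    _ = ∫ _ in (0 : ℝ)..1, (1 : ℝ) := by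
        simp_rw [intervalIntegral.integral_of_le zero_le_one]
        exact setIntegral_congr_fun measurableSet_Ioc fun s hs ↦ integral_arcsineDens hs.1
    _ = 1 := by simp

lemma integral_psiDens_zero_one : ∫ t in 0..1, psiDens t = 1 / 2 := by
  have hsymm : ∫ t in -1..0, psiDens t = ∫ t in 0..1, psiDens t := by
    simpa [psiDens_neg] using intervalIntegral.integral_comp_neg psiDens (a := -1) (b := 0)
  have hsplit := intervalIntegral.integral_add_adjacent_intervals
    (intervalIntegrable_psiDens (-1) 0) (intervalIntegrable_psiDens 0 1)
  linarith [integral_psiDens]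

end EquilibriumDensity

section Potential

lemma eqOn_psiDens_arcosh_max_div {r : ℝ} (hr : 0 < r) :
    Set.EqOn (fun s ↦ π * psiDens (s / r)) (fun s ↦ arcosh (max 1 (r / s))) (Set.Ioc 0 r) := by
  intro s hs
  simp only [psiDens_eq_arcosh, abs_of_pos (div_pos hs.1 hr), inv_div,
    max_eq_right ((one_le_div hs.1).2 hs.2)]
  field_simp

lemma eqOn_zero_arcosh_max_div {r : ℝ} (hr : 0 < r) :
    Set.EqOn (fun _ ↦ 0) (fun s ↦ arcosh (max 1 (r / s))) (Set.Ici r) := by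
  intro s hs
  simp [max_eq_left ((div_le_one (hr.trans_le hs)).2 hs)]

lemma intervalIntegrable_arcosh_max_div_zero_self {r : ℝ} (hr : 0 < r) :
    IntervalIntegrable (fun s ↦ arcosh (max 1 (r / s))) volume 0 r := by
  have hψ : IntervalIntegrable (fun s ↦ π * psiDens (s / r)) volume 0 r := by
    simpa [div_eq_mul_inv] using
      ((intervalIntegrable_psiDens 0 1).comp_mul_right (c := r⁻¹)).const_mul π
  exact hψ.congr (Set.uIoc_of_le hr.le ▸ eqOn_psiDens_arcosh_max_div hr)

lemma intervalIntegrable_arcosh_max_div_self {r b : ℝ} (hr : 0 < r) (hrb : r ≤ b) :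
    IntervalIntegrable (fun s ↦ arcosh (max 1 (r / s))) volume r b := by
  refine intervalIntegrable_const.congr ((eqOn_zero_arcosh_max_div hr).mono ?_)
  rw [Set.uIoc_of_le hrb]
  exact fun s hs ↦ hs.1.le

lemma intervalIntegrable_arcosh_max_div {r b : ℝ} (hr : 0 ≤ r) (hrb : r ≤ b) :
    IntervalIntegrable (fun s ↦ arcosh (max 1 (r / s))) volume 0 b := by
  rcases hr.eq_or_lt with rfl | hr
  · simp
  · exact (intervalIntegrable_arcosh_max_div_zero_self hr).trans
      (intervalIntegrable_arcosh_max_div_self hr hrb)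

lemma integral_arcosh_max_div {r b : ℝ} (hr : 0 ≤ r) (hrb : r ≤ b) :
    ∫ s in 0..b, arcosh (max 1 (r / s)) = π / 2 * r := by
  rcases hr.eq_or_lt with rfl | hr
  · simp
  have hleft : ∫ s in 0..r, arcosh (max 1 (r / s)) = π / 2 * r := by
    rw [← intervalIntegral.integral_congr_Ioo_of_le hr.le
        ((eqOn_psiDens_arcosh_max_div hr).mono Set.Ioo_subset_Ioc_self),
      intervalIntegral.integral_const_mul, intervalIntegral.integral_comp_div _ hr.ne',
      zero_div, div_self hr.ne', integral_psiDens_zero_one, smul_eq_mul]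
    ring
  have hright : ∫ s in r..b, arcosh (max 1 (r / s)) = 0 := by
    rw [← intervalIntegral.integral_congr_Ioo_of_le hrb
        ((eqOn_zero_arcosh_max_div hr).mono fun s hs ↦ hs.1.le),
      intervalIntegral.integral_zero]
  rw [← intervalIntegral.integral_add_adjacent_intervals
      (intervalIntegrable_arcosh_max_div_zero_self hr)
      (intervalIntegrable_arcosh_max_div_self hr hrb), hleft, hright, add_zero]

lemma intervalIntegrable_log_div_const (a b c : ℝ) :
    IntervalIntegrable (fun s ↦ log (s / c)) volume a b := by
  refine MeromorphicOn.intervalIntegrable_log fun s _ ↦ AnalyticAt.meromorphicAt ?_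
  simp only [div_eq_mul_inv]
  fun_prop

lemma integral_log_div_const (b : ℝ) {c : ℝ} (hc : c ≠ 0) :
    ∫ s in 0..b, log (s / c) = b * log (b / c) - b := by
  rw [intervalIntegral.integral_comp_div log hc, integral_log, smul_eq_mul, zero_div, zero_mul]
  field_simp
  ring

lemma integrableOn_log_abs_sub_mul_psiDens (x : ℝ) :
    IntegrableOn (fun t ↦ log |x - t| * psiDens t) (Set.Ioc (-1) 1) :=
  (memLp_two_log_abs_sub x (-1) 1).integrable_mul (memLp_two_psiDens (-1) 1)

lemma integral_log_abs_sub_mul_psiDens (x : ℝ) :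
    ∫ t in -1..1, log |x - t| * psiDens t =
      ∫ s in 0..1, (log (s / 2) + arcosh (max 1 (|x| / s))) := by
  rw [integral_mul_psiDens (memLp_two_log_abs_sub x (-1) 1).aestronglyMeasurable
    (integrableOn_log_abs_sub_mul_psiDens x)]
  exact intervalIntegral.integral_congr_Ioo_of_le zero_le_one fun s hs ↦
    integral_log_abs_sub_mul_arcsineDens x hs.1

end Potential

/-- **Euler–Lagrange equality on the support.**
For every `x ∈ [-1,1]`:
`2 ∫_{-1}^1 log|x-t| ψ(t) dt - π|x| = -2 - 2 log 2`. -/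
theorem euler_lagrange_on_support (x : ℝ) (hx : x ∈ Set.Icc (-1 : ℝ) 1) :
    2 * (∫ t in (-1 : ℝ)..1, Real.log |x - t| * psiDens t) - π * |x| =
      -2 - 2 * Real.log 2 := by
  have hpotential : ∫ t in -1..1, log |x - t| * psiDens t = -1 - log 2 + π / 2 * |x| := by
    have hx_abs : |x| ≤ 1 := abs_le.2 hx
    rw [integral_log_abs_sub_mul_psiDens,
      intervalIntegral.integral_add (intervalIntegrable_log_div_const 0 1 2)
        (intervalIntegrable_arcosh_max_div (abs_nonneg x) hx_abs),
      integral_log_div_const 1 two_ne_zero, integral_arcosh_max_div (abs_nonneg x) hx_abs,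
      one_div, log_inv]
    ring
  rw [hpotential]
  ring
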